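/- arXiv:math/0607669 — 5 statements merged into one kernel-verified Lean document; each statement's English description precedes it below -/
import Mathlib

section
/- Let 0 → W → V → V/W → 0 be a short exact sequence of finite-dimensional vector spaces over a field, and let U_1, …, U_s be linear subspaces of V. Set S_i := W ∩ U_i and let M_i denote the image (U_i + W)/W of U_i in V/W, for i = 1, …, s. If S_1, …, S_s meet transversally in W, then U_1, …, U_s meet transversally in V if and only if M_1, …, M_s meet transversally in V/W. -/
/-- A family of subspaces of `M` *meets transversally* if their annihilators in the dual
space form a direct sum (are independent subspaces of `Module.Dual K M`). -/
def MeetsTransversally {K : Type*} [Field K] {M : Type*} [AddCommGroup M] [Module K M]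
    {ι : Type*} (U : ι → Submodule K M) : Prop :=
  iSupIndep fun i => (U i).dualAnnihilator

/-!
Dualizing the exact sequence `W → V → Q → 0` gives `0 → Q* → V* → W*`. Under it the annihilator
of the image of `U_i` in `Q` is the preimage of `U_i^ann`, while the image of `U_i^ann` in `W*` lies
in the annihilator of the preimage `S_i` of `U_i` in `W`. So the images of the `U_i^ann` in `W*` are
independent, and the components of a vanishing sum `∑ φ_i = 0` with `φ_i ∈ U_i^ann` all
restrict to zero on `W`: every relation between the `U_i^ann` already lives in `Q*`.
-/

section Independence

variable {R M N P ι : Type*} [Ring R] [AddCommGroup M] [AddCommGroup N] [AddCommGroup P]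
  [Module R M] [Module R N] [Module R P] {f : M →ₗ[R] N} {g : N →ₗ[R] P} {p : ι → Submodule R N}

theorem iSupIndep_comap_of_injective (hf : Function.Injective f) (hp : iSupIndep p) :
    iSupIndep fun i => (p i).comap f := by
  rw [iSupIndep_iff_finsetSum_eq_zero_imp_eq_zero] at hp ⊢
  intro t v hv hsum i hi
  have hfsum : ∑ j ∈ t, f (v j) = 0 := by rw [← map_sum, hsum, map_zero]
  exact (map_eq_zero_iff f hf).1 (hp t (f ∘ v) hv hfsum i hi)

theorem iSupIndep_of_inf_ker_of_map (hker : iSupIndep fun i => p i ⊓ LinearMap.ker g)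
    (hmap : iSupIndep fun i => (p i).map g) : iSupIndep p := by
  rw [iSupIndep_iff_finsetSum_eq_zero_imp_eq_zero] at hker hmap ⊢
  intro t v hv hsum
  have hgsum : ∑ i ∈ t, g (v i) = 0 := by rw [← map_sum, hsum, map_zero]
  have hgv : ∀ i ∈ t, g (v i) = 0 :=
    hmap t (g ∘ v) (fun i hi => Submodule.mem_map_of_mem (hv i hi)) hgsum
  exact hker t v (fun i hi => ⟨hv i hi, hgv i hi⟩) hsum

theorem iSupIndep_iff_comap_of_exact (hf : Function.Injective f) (hfg : Function.Exact f g)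
    (hmap : iSupIndep fun i => (p i).map g) :
    iSupIndep p ↔ iSupIndep fun i => (p i).comap f := by
  refine ⟨iSupIndep_comap_of_injective hf, fun hcomap => iSupIndep_of_inf_ker_of_map ?_ hmap⟩
  simpa only [Submodule.map_comap_eq, ← hfg.linearMap_ker_eq, inf_comm] using
    f.iSupIndep_map hf hcomap

end Independence

theorem dualAnnihilator_map {R M N : Type*} [CommSemiring R] [AddCommMonoid M] [AddCommMonoid N]
    [Module R M] [Module R N] (f : M →ₗ[R] N) (p : Submodule R M) :
    (p.map f).dualAnnihilator = p.dualAnnihilator.comap f.dualMap := by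
  ext φ
  simp [Submodule.mem_dualAnnihilator]

theorem meetsTransversally_iff_map_of_inter_meetsTransversally_general
    {K W V Q ι : Type*} [Field K] [AddCommGroup W] [AddCommGroup V] [AddCommGroup Q]
    [Module K W] [Module K V] [Module K Q] {f : W →ₗ[K] V} {g : V →ₗ[K] Q}
    (hfg : Function.Exact f g) (hg : Function.Surjective g) (U : ι → Submodule K V)
    (hS : MeetsTransversally fun i => (U i).comap f) :
    MeetsTransversally U ↔ MeetsTransversally fun i => (U i).map g := by
  have hdual : Function.Exact g.dualMap f.dualMap :=
    LinearMap.exact_lcomp_of_exact_of_surjective K hfg hg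
  have hmap : iSupIndep fun i => (U i).dualAnnihilator.map f.dualMap :=
    hS.mono fun i => (U i).dualAnnihilator_map_dualMap_le f
  simpa only [MeetsTransversally, dualAnnihilator_map] using
    iSupIndep_iff_comap_of_exact (LinearMap.dualMap_injective_of_surjective hg) hdual hmap

/-- If the subspaces `S_i = W ∩ U_i` meet transversally in `W`, then
`U_1, …, U_s` meet transversally in `V` if and only if the images `M_i = (U_i + W)/W`
meet transversally in `V/W`. -/
theorem meetsTransversally_iff_map_of_inter_meetsTransversally
    {K V : Type*} [Field K] [AddCommGroup V] [Module K V] [FiniteDimensional K V]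
    (W : Submodule K V) {s : ℕ} (U : Fin s → Submodule K V)
    (hS : MeetsTransversally (fun i => (U i).comap W.subtype)) :
    MeetsTransversally U ↔ MeetsTransversally (fun i => (U i).map W.mkQ) :=
  meetsTransversally_iff_map_of_inter_meetsTransversally_general
    (LinearMap.exact_subtype_mkQ W) W.mkQ_surjective U hS
end

section
/- For any two roots β_1, β_2 ∈ Φ(g/p), one has ⟨β_1, β_2⟩ ≥ 0. -/
open scoped RealInnerProductSpace

/-- The Cartan pairing `⟨β, γ⟩ = 2(β,γ)/(γ,γ)`. -/
noncomputable def rpair {V : Type*} [NormedAddCommGroup V] [InnerProductSpace ℝ V]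
    (β γ : V) : ℝ := 2 * ⟪β, γ⟫ / ⟪γ, γ⟫

/-- An irreducible reduced crystallographic root system in a real inner product space,
equipped with a base `Δ` of simple roots, the coefficient function `m` (so that
`β = ∑_{δ ∈ Δ} m β δ • δ` for roots `β`) and the highest root `θ`. -/
structure IrredRootSystem (V : Type*) [NormedAddCommGroup V] [InnerProductSpace ℝ V] where
  Φ : Set V
  Δ : Finset V
  m : V → V → ℤ
  θ : V
  finite : Φ.Finite
  zero_notMem : (0 : V) ∉ Φ
  spans : Submodule.span ℝ Φ = ⊤
  neg_mem : ∀ β ∈ Φ, -β ∈ Φ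
  reflect_mem : ∀ β ∈ Φ, ∀ γ ∈ Φ, β - rpair β γ • γ ∈ Φ
  crystallographic : ∀ β ∈ Φ, ∀ γ ∈ Φ, ∃ z : ℤ, rpair β γ = z
  reduced : ∀ β ∈ Φ, ∀ t : ℝ, t • β ∈ Φ → t = 1 ∨ t = -1
  irreducible : ¬ ∃ A B : Set V, A.Nonempty ∧ B.Nonempty ∧ Disjoint A B ∧ A ∪ B = Φ ∧
      ∀ β ∈ A, ∀ γ ∈ B, ⟪β, γ⟫ = 0
  base_subset : ↑Δ ⊆ Φ
  base_indep : LinearIndependent ℝ (fun δ : Δ => (δ : V))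
  base_repr : ∀ β ∈ Φ, β = ∑ δ ∈ Δ, (m β δ : ℝ) • δ
  base_sign : ∀ β ∈ Φ, (∀ δ ∈ Δ, 0 ≤ m β δ) ∨ (∀ δ ∈ Δ, m β δ ≤ 0)
  theta_mem : θ ∈ Φ
  theta_highest : ∀ β ∈ Φ, ∀ δ ∈ Δ, m β δ ≤ m θ δ

namespace IrredRootSystem

variable {V : Type*} [NormedAddCommGroup V] [InnerProductSpace ℝ V]

/-- The positive roots `Φ⁺`. -/
def Pos (D : IrredRootSystem V) : Set V := {β | β ∈ D.Φ ∧ ∀ δ ∈ D.Δ, 0 ≤ D.m β δ}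

/-- The negative roots `Φ⁻`. -/
def Neg (D : IrredRootSystem V) : Set V := {β | β ∈ D.Φ ∧ ∀ δ ∈ D.Δ, D.m β δ ≤ 0}

/-- A long root: a root of maximal squared length. -/
def IsLong (D : IrredRootSystem V) (β : V) : Prop :=
  β ∈ D.Φ ∧ ∀ γ ∈ D.Φ, ⟪γ, γ⟫ ≤ ⟪β, β⟫

/-- `Φ(g/p)`: the roots whose coefficient on the cominuscule simple root `α` is `1`. -/
def gp (D : IrredRootSystem V) (α : V) : Set V := {β | β ∈ D.Φ ∧ D.m β α = 1}

/-- An orthogonal sequence of long roots in `Φ(g/p)`. -/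
def IsOrthLongSeq (D : IrredRootSystem V) (α : V) {r : ℕ} (a : Fin r → V) : Prop :=
  (∀ i, D.IsLong (a i)) ∧ (∀ i, a i ∈ D.gp α) ∧ ∀ i j, i ≠ j → ⟪a i, a j⟫ = 0

end IrredRootSystem

/-!
Reflecting `β₁` in `β₂` gives a root whose `α`-coefficient is `m β₁ α - ⟨β₁, β₂⟩ * m β₂ α`. When
`m β₁ α` is already the largest `α`-coefficient of any root and `m β₂ α` is positive, this forces
`0 ≤ ⟨β₁, β₂⟩`. In the cominuscule case every root of `Φ(g/p)` has the largest coefficient, `1`.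
-/

section

variable {V : Type*} [NormedAddCommGroup V] [InnerProductSpace ℝ V]

theorem rpair_nonneg_of_isMaxOn {S : Set V} {f : V →ₗ[ℝ] ℝ} {β γ : V} (hmax : IsMaxOn f S β)
    (hrefl : β - rpair β γ • γ ∈ S) (hpos : 0 < f γ) : 0 ≤ rpair β γ := by
  have hle : f β - rpair β γ * f γ ≤ f β := by
    simpa only [map_sub, map_smul, smul_eq_mul] using isMaxOn_iff.mp hmax _ hrefl
  exact nonneg_of_mul_nonneg_left (sub_le_self_iff _ |>.mp hle) hpos

namespace IrredRootSystem

theorem span_simpleRoots (D : IrredRootSystem V) : Submodule.span ℝ (D.Δ : Set V) = ⊤ := by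
  refine top_unique (D.spans.ge.trans (Submodule.span_le.mpr fun β hβ => ?_))
  rw [D.base_repr β hβ]
  exact Submodule.sum_smul_mem _ _ fun δ hδ => Submodule.subset_span hδ

/-- The simple roots as a basis of the ambient space. Its coordinate functionals extend the
coefficients `m · δ`, which are meaningful only on roots, linearly to all of `V`. -/
noncomputable def simpleBasis (D : IrredRootSystem V) : Module.Basis D.Δ ℝ V :=
  Module.Basis.mk D.base_indep (by simpa using D.span_simpleRoots.ge)

theorem simpleBasis_coord_eq_m (D : IrredRootSystem V) {β : V} (hβ : β ∈ D.Φ) (δ : D.Δ) :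
    D.simpleBasis.coord δ β = D.m β δ := by
  have hsum : β = ∑ ε : D.Δ, (D.m β ε : ℝ) • D.simpleBasis ε := by
    simpa only [simpleBasis, Module.Basis.mk_apply,
      Finset.sum_coe_sort D.Δ fun ε => (D.m β ε : ℝ) • ε] using D.base_repr β hβ
  rw [Module.Basis.coord_apply]
  conv_lhs => rw [hsum, Module.Basis.repr_sum_self]

theorem isMaxOn_simpleBasis_coord (D : IrredRootSystem V) {β : V} (hβ : β ∈ D.Φ) {δ : D.Δ}
    (hmax : D.m β δ = D.m D.θ δ) : IsMaxOn (D.simpleBasis.coord δ) D.Φ β := by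
  refine isMaxOn_iff.mpr fun γ hγ => ?_
  rw [D.simpleBasis_coord_eq_m hγ, D.simpleBasis_coord_eq_m hβ, hmax]
  exact_mod_cast D.theta_highest γ hγ δ δ.2

end IrredRootSystem

theorem cominuscule_pairing_nonneg_general (D : IrredRootSystem V) {α β₁ β₂ : V} (hα : α ∈ D.Δ)
    (h₁ : β₁ ∈ D.Φ) (hmax : D.m β₁ α = D.m D.θ α) (h₂ : β₂ ∈ D.Φ) (hpos : 0 < D.m β₂ α) :
    0 ≤ rpair β₁ β₂ := by
  have hcoord : 0 < D.simpleBasis.coord ⟨α, hα⟩ β₂ := by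
    rw [D.simpleBasis_coord_eq_m h₂]
    exact_mod_cast hpos
  exact rpair_nonneg_of_isMaxOn (D.isMaxOn_simpleBasis_coord h₁ hmax)
    (D.reflect_mem β₁ h₁ β₂ h₂) hcoord

end

/-- In a cominuscule situation (the simple root `α` has coefficient 1 in the
highest root), any two roots of `Φ(g/p)` pair nonnegatively. -/
theorem cominuscule_pairing_nonneg {V : Type*} [NormedAddCommGroup V] [InnerProductSpace ℝ V]
    (D : IrredRootSystem V) (α : V) (hα : α ∈ D.Δ) (hcom : D.m D.θ α = 1)
    (β₁ β₂ : V) (h₁ : β₁ ∈ D.gp α) (h₂ : β₂ ∈ D.gp α) :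
    0 ≤ rpair β₁ β₂ :=
  cominuscule_pairing_nonneg_general D hα h₁.1 (h₁.2.trans hcom.symm) h₂.1
    (zero_lt_one.trans_eq h₂.2.symm)
end

section
/- Let α_1, …, α_r (r ≥ 1) be an orthogonal sequence of long roots in Φ(g/p) that is not maximal, i.e., there exists a long root in Φ(g/p) orthogonal to every α_i. Set Φ(z) := {β ∈ Φ(g/p) : ⟨β, α_i⟩ = 0 for all i} and let Φ' := Φ ∩ span_ℚ(Φ(z)) be the set of roots lying in the rational span of Φ(z). Then Φ' cannot be partitioned into two nonempty subsets that are mutually orthogonal with respect to (·,·); equivalently, the graph with vertex set Φ' in which two roots are joined by an edge when they are non-orthogonal is connected. (This is the root-theoretic content of the assertion that the semisimple part of G' is simple.) -/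
open scoped RealInnerProductSpace

/-! The coefficient of `α` grades the roots by `-1, 0, 1`, and `Φ(g/p)` is the degree one part, in
which all inner products are nonnegative. Since `Φ` is irreducible, two orthogonal roots `β, γ` of
degree one have a common non-orthogonal root `δ`, which can be moved to degree one by a reflection
and a sign. Then `-s_γ s_β δ` again has degree one, so a degree one root `x` orthogonal to `β` and
`γ`, such as each `α_i` when `β, γ ∈ Φ(z)`, satisfies both `⟪δ, x⟫ ≥ 0` and `-⟪δ, x⟫ ≥ 0`. Hence any
two elements of `Φ(z)` are joined by a path of length at most two inside `Φ(z)`, and every root in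
the span of `Φ(z)` is adjacent to one of them. -/

section

variable {V : Type*} [NormedAddCommGroup V] [InnerProductSpace ℝ V]

/-- Orthogonal indecomposability: `S` is not a disjoint union of two nonempty mutually orthogonal
subsets. For a root system this is irreducibility; the empty set counts as indecomposable. -/
def IsOrthIndecomposable (S : Set V) : Prop :=
  ¬ ∃ A B : Set V, A.Nonempty ∧ B.Nonempty ∧ Disjoint A B ∧ A ∪ B = S ∧
    ∀ β ∈ A, ∀ γ ∈ B, ⟪β, γ⟫ = 0

theorem exists_inner_ne_zero_of_mem_span {Z : Set V} {x : V} (hx : x ∈ Submodule.span ℝ Z)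
    (hx0 : x ≠ 0) : ∃ z ∈ Z, ⟪x, z⟫ ≠ 0 := by
  by_contra! h
  have hortho : Submodule.span ℝ {x} ⟂ Submodule.span ℝ Z :=
    Submodule.isOrtho_span.mpr fun u hu z hz => Set.mem_singleton_iff.mp hu ▸ h z hz
  exact hx0 (inner_self_eq_zero.mp (hortho.inner_eq (Submodule.mem_span_singleton_self x) hx))

theorem IsOrthIndecomposable.of_subset_span {Z S : Set V} (h0 : 0 ∉ S) (hZS : Z ⊆ S)
    (hSZ : S ⊆ Submodule.span ℝ Z)
    (hZ : ∀ β ∈ Z, ∀ γ ∈ Z, ∃ δ ∈ S, ⟪δ, β⟫ ≠ 0 ∧ ⟪δ, γ⟫ ≠ 0) : IsOrthIndecomposable S := by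
  rintro ⟨A, B, ⟨x, hx⟩, ⟨y, hy⟩, -, rfl, hAB⟩
  have exists_adj : ∀ v ∈ A ∪ B, ∃ z ∈ Z, ⟪v, z⟫ ≠ 0 := fun v hv =>
    exists_inner_ne_zero_of_mem_span (hSZ hv) (ne_of_mem_of_not_mem hv h0)
  obtain ⟨β, hβ, hxβ⟩ := exists_adj x (.inl hx)
  obtain ⟨γ, hγ, hyγ⟩ := exists_adj y (.inr hy)
  have hβA : β ∈ A := (hZS hβ).resolve_right fun h => hxβ (hAB x hx β h)
  have hγB : γ ∈ B := (hZS hγ).resolve_left fun h =>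
    hyγ (inner_eq_zero_symm.mp (hAB γ h y hy))
  obtain ⟨δ, hδA | hδB, hδβ, hδγ⟩ := hZ β hβ γ hγ
  · exact hδγ (hAB δ hδA γ hγB)
  · exact hδβ (inner_eq_zero_symm.mp (hAB β hβA δ hδB))

theorem rpair_eq_zero_iff {β γ : V} : rpair β γ = 0 ↔ ⟪β, γ⟫ = 0 := by
  rcases eq_or_ne γ 0 with rfl | hγ
  · simp [rpair]
  · simp [rpair, hγ]

theorem rpair_nonneg_iff {β γ : V} : 0 ≤ rpair β γ ↔ 0 ≤ ⟪β, γ⟫ := by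
  rcases eq_or_ne γ 0 with rfl | hγ
  · simp [rpair]
  · rw [rpair, le_div_iff₀ (real_inner_self_pos.mpr hγ), zero_mul,
      mul_nonneg_iff_of_pos_left two_pos]

theorem rpair_self {γ : V} (hγ : γ ≠ 0) : rpair γ γ = 2 :=
  mul_div_cancel_right₀ 2 (inner_self_ne_zero.mpr hγ)

theorem inner_sub_rpair_smul_self (β γ : V) : ⟪β - rpair β γ • γ, γ⟫ = -⟪β, γ⟫ := by
  rcases eq_or_ne γ 0 with rfl | hγ
  · simp
  · have hcancel : rpair β γ * ⟪γ, γ⟫ = 2 * ⟪β, γ⟫ :=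
      div_mul_cancel₀ _ (inner_self_ne_zero.mpr hγ)
    rw [inner_sub_left, real_inner_smul_left, hcancel]
    ring

theorem inner_sub_smul_of_inner_eq_zero {β γ x : V} (c : ℝ) (h : ⟪γ, x⟫ = 0) :
    ⟪β - c • γ, x⟫ = ⟪β, x⟫ := by
  rw [inner_sub_left, real_inner_smul_left, h, mul_zero, sub_zero]

/-- `Φ` is stable under the reflections in its elements. Nothing is asked at `γ = 0`, where
`rpair β 0 = 0`. -/
def IsReflectionClosed (Φ : Set V) : Prop :=
  ∀ β ∈ Φ, ∀ γ ∈ Φ, β - rpair β γ • γ ∈ Φ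

variable {Φ : Set V}

theorem IsReflectionClosed.neg_mem (hΦ : IsReflectionClosed Φ) {γ : V} (hγ : γ ∈ Φ) : -γ ∈ Φ := by
  rcases eq_or_ne γ 0 with rfl | hγ0
  · rwa [neg_zero]
  · have hrefl := hΦ γ hγ γ hγ
    rwa [rpair_self hγ0, two_smul, sub_add_cancel_left] at hrefl

theorem IsReflectionClosed.exists_inner_ne_zero_of_path (hΦ : IsReflectionClosed Φ)
    {β ε x y : V} (hε : ε ∈ Φ) (hx : x ∈ Φ) (hβε : ⟪ε, β⟫ ≠ 0) (hεx : ⟪ε, x⟫ ≠ 0)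
    (hxy : ⟪x, y⟫ ≠ 0) : ∃ δ ∈ Φ, ⟪δ, β⟫ ≠ 0 ∧ ⟪δ, y⟫ ≠ 0 := by
  by_cases hεy : ⟪ε, y⟫ = 0
  · by_cases hxβ : ⟪x, β⟫ = 0
    · have hpair : rpair ε x ≠ 0 := rpair_eq_zero_iff.not.mpr hεx
      refine ⟨ε - rpair ε x • x, hΦ ε hε x hx, ?_, ?_⟩
      · rwa [inner_sub_smul_of_inner_eq_zero _ hxβ]
      · rw [inner_sub_left, real_inner_smul_left, hεy, zero_sub]
        exact neg_ne_zero.mpr (mul_ne_zero hpair hxy)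
    · exact ⟨x, hx, hxβ, hxy⟩
  · exact ⟨ε, hε, hβε, hεy⟩

theorem IsReflectionClosed.exists_common_inner_ne_zero (hΦ : IsReflectionClosed Φ)
    (hirr : IsOrthIndecomposable Φ) {β γ : V} (hβ : β ∈ Φ) (hγ : γ ∈ Φ) (hβ0 : β ≠ 0) :
    ∃ δ ∈ Φ, ⟪δ, β⟫ ≠ 0 ∧ ⟪δ, γ⟫ ≠ 0 := by
  by_contra hβγ
  let N : Set V := {x | ∃ δ ∈ Φ, ⟪δ, β⟫ ≠ 0 ∧ ⟪δ, x⟫ ≠ 0}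
  have hββ : ⟪β, β⟫ ≠ 0 := inner_self_ne_zero.mpr hβ0
  refine hirr ⟨Φ ∩ N, Φ \ N, ⟨β, hβ, β, hβ, hββ, hββ⟩, ⟨γ, hγ, hβγ⟩,
    disjoint_inf_sdiff, Set.inter_union_sdiff Φ N, ?_⟩
  rintro x ⟨hx, ε, hε, hβε, hεx⟩ y ⟨-, hyN⟩
  by_contra hxy
  exact hyN (hΦ.exists_inner_ne_zero_of_path hε hx hβε hεx hxy)

/-- A cominuscule functional (minuscule coweight) on `Φ`: it grades `Φ` in degrees `-1, 0, 1`. -/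
def IsCominuscule (f : V →ₗ[ℝ] ℝ) (Φ : Set V) : Prop :=
  ∀ β ∈ Φ, f β = -1 ∨ f β = 0 ∨ f β = 1

/-- The degree one part of `Φ` for the grading by `f`; it is `Φ(g/p)` when `f` is the coefficient
of a cominuscule simple root. -/
def degreeOne (f : V →ₗ[ℝ] ℝ) (Φ : Set V) : Set V := {β ∈ Φ | f β = 1}

variable {f : V →ₗ[ℝ] ℝ}

theorem ne_zero_of_mem_degreeOne {β : V} (hβ : β ∈ degreeOne f Φ) : β ≠ 0 := by
  rintro rfl
  exact zero_ne_one (f.map_zero.symm.trans hβ.2)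

namespace IsCominuscule

theorem mem_degreeOne_or_neg_mem (hf : IsCominuscule f Φ) (hΦ : IsReflectionClosed Φ) {δ : V}
    (hδ : δ ∈ Φ) (hfδ : f δ ≠ 0) : δ ∈ degreeOne f Φ ∨ -δ ∈ degreeOne f Φ := by
  rcases hf δ hδ with h | h | h
  · exact .inr ⟨hΦ.neg_mem hδ, by rw [map_neg, h, neg_neg]⟩
  · exact absurd h hfδ
  · exact .inl ⟨hδ, h⟩

theorem rpair_eq (hf : IsCominuscule f Φ) (hΦ : IsReflectionClosed Φ) {β γ : V}
    (hβ : β ∈ degreeOne f Φ) (hγ : γ ∈ degreeOne f Φ) :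
    rpair β γ = 0 ∨ rpair β γ = 1 ∨ rpair β γ = 2 := by
  have hdeg : f (β - rpair β γ • γ) = 1 - rpair β γ := by
    rw [map_sub, map_smul, hβ.2, hγ.2, smul_eq_mul, mul_one]
  rcases hf _ (hΦ β hβ.1 γ hγ.1) with h | h | h <;> grind

theorem inner_nonneg (hf : IsCominuscule f Φ) (hΦ : IsReflectionClosed Φ) {β γ : V}
    (hβ : β ∈ degreeOne f Φ) (hγ : γ ∈ degreeOne f Φ) : 0 ≤ ⟪β, γ⟫ := by
  rw [← rpair_nonneg_iff]
  rcases hf.rpair_eq hΦ hβ hγ with h | h | h <;> norm_num [h]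

theorem one_le_rpair (hf : IsCominuscule f Φ) (hΦ : IsReflectionClosed Φ) {β γ : V}
    (hβ : β ∈ degreeOne f Φ) (hγ : γ ∈ degreeOne f Φ) (hβγ : ⟪β, γ⟫ ≠ 0) : 1 ≤ rpair β γ := by
  rcases hf.rpair_eq hΦ hβ hγ with h | h | h
  · exact absurd (rpair_eq_zero_iff.mp h) hβγ
  · exact h.ge
  · norm_num [h]

theorem exists_mem_degreeOne_inner_ne_zero (hf : IsCominuscule f Φ) (hΦ : IsReflectionClosed Φ)
    (hirr : IsOrthIndecomposable Φ) {β γ : V} (hβ : β ∈ degreeOne f Φ) (hγ : γ ∈ degreeOne f Φ)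
    (hβγ : ⟪β, γ⟫ = 0) : ∃ δ ∈ degreeOne f Φ, ⟪δ, β⟫ ≠ 0 ∧ ⟪δ, γ⟫ ≠ 0 := by
  suffices h : ∃ δ ∈ Φ, f δ ≠ 0 ∧ ⟪δ, β⟫ ≠ 0 ∧ ⟪δ, γ⟫ ≠ 0 by
    obtain ⟨δ, hδ, hfδ, hδβ, hδγ⟩ := h
    rcases hf.mem_degreeOne_or_neg_mem hΦ hδ hfδ with hpos | hneg
    · exact ⟨δ, hpos, hδβ, hδγ⟩
    · exact ⟨-δ, hneg, by rwa [inner_neg_left, neg_ne_zero], by rwa [inner_neg_left, neg_ne_zero]⟩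
  obtain ⟨ε, hε, hεβ, hεγ⟩ :=
    hΦ.exists_common_inner_ne_zero hirr hβ.1 hγ.1 (ne_zero_of_mem_degreeOne hβ)
  by_cases hfε : f ε = 0
  · refine ⟨ε - rpair ε β • β, hΦ ε hε β hβ.1, ?_, ?_, ?_⟩
    · have hdeg : f (ε - rpair ε β • β) = -rpair ε β := by
        rw [map_sub, map_smul, hfε, hβ.2, smul_eq_mul, mul_one, zero_sub]
      rw [hdeg]
      exact neg_ne_zero.mpr (rpair_eq_zero_iff.not.mpr hεβ)
    · rwa [inner_sub_rpair_smul_self, neg_ne_zero]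
    · rwa [inner_sub_smul_of_inner_eq_zero _ hβγ]
  · exact ⟨ε, hε, hfε, hεβ, hεγ⟩

theorem neg_reflect_reflect_mem_degreeOne (hf : IsCominuscule f Φ) (hΦ : IsReflectionClosed Φ)
    {β γ δ : V} (hβ : β ∈ degreeOne f Φ) (hγ : γ ∈ degreeOne f Φ) (hδ : δ ∈ degreeOne f Φ)
    (hβγ : ⟪β, γ⟫ = 0) (hδβ : ⟪δ, β⟫ ≠ 0) (hδγ : ⟪δ, γ⟫ ≠ 0) :
    -(δ - rpair δ β • β - rpair δ γ • γ) ∈ degreeOne f Φ := by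
  have hpair : rpair (δ - rpair δ β • β) γ = rpair δ γ := by
    simp only [rpair, inner_sub_smul_of_inner_eq_zero _ hβγ]
  have hmem : δ - rpair δ β • β - rpair δ γ • γ ∈ Φ :=
    hpair ▸ hΦ _ (hΦ δ hδ.1 β hβ.1) γ hγ.1
  have hdeg : f (δ - rpair δ β • β - rpair δ γ • γ) = 1 - rpair δ β - rpair δ γ := by
    simp only [map_sub, map_smul, hβ.2, hγ.2, hδ.2, smul_eq_mul, mul_one]
  have hneg : f (δ - rpair δ β • β - rpair δ γ • γ) < 0 := by
    linarith [hf.one_le_rpair hΦ hδ hβ hδβ, hf.one_le_rpair hΦ hδ hγ hδγ]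
  refine (hf.mem_degreeOne_or_neg_mem hΦ hmem hneg.ne).resolve_left fun h => ?_
  linarith [h.2]

theorem inner_eq_zero_of_common_neighbor (hf : IsCominuscule f Φ) (hΦ : IsReflectionClosed Φ)
    {β γ δ x : V} (hβ : β ∈ degreeOne f Φ) (hγ : γ ∈ degreeOne f Φ) (hδ : δ ∈ degreeOne f Φ)
    (hx : x ∈ degreeOne f Φ) (hβγ : ⟪β, γ⟫ = 0) (hδβ : ⟪δ, β⟫ ≠ 0) (hδγ : ⟪δ, γ⟫ ≠ 0)
    (hβx : ⟪β, x⟫ = 0) (hγx : ⟪γ, x⟫ = 0) : ⟪δ, x⟫ = 0 := by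
  have hneg := hf.inner_nonneg hΦ
    (hf.neg_reflect_reflect_mem_degreeOne hΦ hβ hγ hδ hβγ hδβ hδγ) hx
  rw [inner_neg_left, inner_sub_smul_of_inner_eq_zero _ hγx,
    inner_sub_smul_of_inner_eq_zero _ hβx, neg_nonneg] at hneg
  exact hneg.antisymm (hf.inner_nonneg hΦ hδ hx)

theorem exists_mem_degreeOne_inner_ne_zero_of_orthogonal (hf : IsCominuscule f Φ)
    (hΦ : IsReflectionClosed Φ) (hirr : IsOrthIndecomposable Φ) {ι : Sort*} {a : ι → V}
    (ha : ∀ i, a i ∈ degreeOne f Φ) {β γ : V} (hβ : β ∈ degreeOne f Φ) (hγ : γ ∈ degreeOne f Φ)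
    (hβa : ∀ i, ⟪β, a i⟫ = 0) (hγa : ∀ i, ⟪γ, a i⟫ = 0) :
    ∃ δ ∈ degreeOne f Φ, (∀ i, ⟪δ, a i⟫ = 0) ∧ ⟪δ, β⟫ ≠ 0 ∧ ⟪δ, γ⟫ ≠ 0 := by
  by_cases hβγ : ⟪β, γ⟫ = 0
  · obtain ⟨δ, hδ, hδβ, hδγ⟩ := hf.exists_mem_degreeOne_inner_ne_zero hΦ hirr hβ hγ hβγ
    refine ⟨δ, hδ, fun i => ?_, hδβ, hδγ⟩
    exact hf.inner_eq_zero_of_common_neighbor hΦ hβ hγ hδ (ha i) hβγ hδβ hδγ (hβa i) (hγa i)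
  · exact ⟨β, hβ, hβa, inner_self_ne_zero.mpr (ne_zero_of_mem_degreeOne hβ), hβγ⟩

theorem isOrthIndecomposable_of_subset_span (hf : IsCominuscule f Φ) (hΦ : IsReflectionClosed Φ)
    (hirr : IsOrthIndecomposable Φ) {ι : Sort*} {a : ι → V} (ha : ∀ i, a i ∈ degreeOne f Φ)
    {S : Set V} (h0 : 0 ∉ S) (hZS : {z | z ∈ degreeOne f Φ ∧ ∀ i, ⟪z, a i⟫ = 0} ⊆ S)
    (hSZ : S ⊆ Submodule.span ℝ {z | z ∈ degreeOne f Φ ∧ ∀ i, ⟪z, a i⟫ = 0}) :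
    IsOrthIndecomposable S := by
  refine .of_subset_span h0 hZS hSZ ?_
  rintro β ⟨hβ, hβa⟩ γ ⟨hγ, hγa⟩
  obtain ⟨δ, hδ, hδa, hδβ, hδγ⟩ :=
    hf.exists_mem_degreeOne_inner_ne_zero_of_orthogonal hΦ hirr ha hβ hγ hβa hγa
  exact ⟨δ, hZS ⟨hδ, hδa⟩, hδβ, hδγ⟩

end IsCominuscule

end

namespace IrredRootSystem

variable {V : Type*} [NormedAddCommGroup V] [InnerProductSpace ℝ V]

theorem span_base_eq_top (D : IrredRootSystem V) :
    Submodule.span ℝ (Set.range ((↑) : D.Δ → V)) = ⊤ := by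
  rw [eq_top_iff, ← D.spans, Submodule.span_le, Subtype.range_coe]
  intro β hβ
  rw [D.base_repr β hβ]
  exact sum_mem fun δ hδ => Submodule.smul_mem _ _ (Submodule.subset_span hδ)

/-- The simple roots as a basis of `V`; its coordinates extend the integer coefficients `D.m` of
the roots to linear functionals on `V`. -/
noncomputable def basis (D : IrredRootSystem V) : Module.Basis D.Δ ℝ V :=
  .mk D.base_indep D.span_base_eq_top.ge

theorem basis_coord_eq_m (D : IrredRootSystem V) (δ : D.Δ) {β : V} (hβ : β ∈ D.Φ) :
    D.basis.coord δ β = D.m β δ := by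
  have hsum : β = ∑ ε : D.Δ, (D.m β ε : ℝ) • D.basis ε := by
    simp only [basis, Module.Basis.mk_apply]
    rw [Finset.sum_coe_sort D.Δ fun ε => (D.m β ε : ℝ) • ε]
    exact D.base_repr β hβ
  calc D.basis.coord δ β
      = D.basis.repr (∑ ε : D.Δ, (D.m β ε : ℝ) • D.basis ε) δ := by
        rw [← hsum, Module.Basis.coord_apply]
    _ = D.m β δ := congrFun (D.basis.repr_sum_self fun ε => (D.m β ε : ℝ)) δ

theorem gp_eq_degreeOne (D : IrredRootSystem V) (δ : D.Δ) :
    D.gp δ = degreeOne (D.basis.coord δ) D.Φ := by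
  ext β
  refine and_congr_right fun hβ => ?_
  rw [D.basis_coord_eq_m δ hβ, Int.cast_eq_one]

theorem isCominuscule_basis_coord (D : IrredRootSystem V) (δ : D.Δ) (hδ : D.m D.θ δ = 1) :
    IsCominuscule (D.basis.coord δ) D.Φ := by
  intro β hβ
  have hupper : ∀ γ ∈ D.Φ, D.m γ δ ≤ 1 := fun γ hγ => hδ ▸ D.theta_highest γ hγ δ δ.2
  have hneg : D.m (-β) δ = -D.m β δ := by
    have hcoord : (D.m (-β) δ : ℝ) = -D.m β δ := by
      rw [← D.basis_coord_eq_m δ (D.neg_mem β hβ), map_neg, D.basis_coord_eq_m δ hβ]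
    exact_mod_cast hcoord
  have hvalues : D.m β δ = -1 ∨ D.m β δ = 0 ∨ D.m β δ = 1 := by
    have hle := hupper β hβ
    have hge := hupper (-β) (D.neg_mem β hβ)
    lia
  rw [D.basis_coord_eq_m δ hβ]
  exact_mod_cast hvalues

end IrredRootSystem

theorem gprime_root_system_connected_general {V : Type*} [NormedAddCommGroup V]
    [InnerProductSpace ℝ V] (D : IrredRootSystem V) (α : V) (hα : α ∈ D.Δ) (hcom : D.m D.θ α = 1)
    {ι : Sort*} (a : ι → V) (ha : ∀ i, a i ∈ D.gp α) :
    IsOrthIndecomposable {β | β ∈ D.Φ ∧ ∃ (T : Finset V) (c : V → ℚ),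
      (↑T : Set V) ⊆ {z | z ∈ D.gp α ∧ ∀ i, rpair z (a i) = 0} ∧
      β = ∑ γ ∈ T, (c γ : ℝ) • γ} := by
  have hf := D.isCominuscule_basis_coord ⟨α, hα⟩ hcom
  have hgp := D.gp_eq_degreeOne ⟨α, hα⟩
  simp only [rpair_eq_zero_iff, hgp] at ha ⊢
  refine hf.isOrthIndecomposable_of_subset_span D.reflect_mem D.irreducible ha
    (fun h => D.zero_notMem h.1) ?_ ?_
  · exact fun z hz => ⟨hz.1.1, {z}, 1, by simpa using hz, by simp⟩
  · rintro _ ⟨-, T, c, hT, rfl⟩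
    exact sum_mem fun γ hγ => Submodule.smul_mem _ _ (Submodule.subset_span (hT hγ))

/-- (Root-theoretic content of "the semisimple part of `G'` is simple".)
For a non-maximal orthogonal sequence of long roots in `Φ(g/p)`, the set `Φ'` of roots
lying in the rational span of `Φ(z) = {β ∈ Φ(g/p) : ⟨β, α_i⟩ = 0 for all i}` cannot be
partitioned into two nonempty mutually orthogonal subsets. -/
theorem gprime_root_system_connected {V : Type*} [NormedAddCommGroup V]
    [InnerProductSpace ℝ V] (D : IrredRootSystem V)
    (α : V) (hα : α ∈ D.Δ) (hcom : D.m D.θ α = 1)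
    {r : ℕ} (hr : 1 ≤ r) (a : Fin r → V) (ha : D.IsOrthLongSeq α a)
    (hnotmax : ∃ β, D.IsLong β ∧ β ∈ D.gp α ∧ ∀ i, ⟪β, a i⟫ = 0) :
    ¬ ∃ A B : Set V, A.Nonempty ∧ B.Nonempty ∧ Disjoint A B ∧
      A ∪ B = {β | β ∈ D.Φ ∧ ∃ (T : Finset V) (c : V → ℚ),
        (↑T : Set V) ⊆ {z | z ∈ D.gp α ∧ ∀ i, rpair z (a i) = 0} ∧
        β = ∑ γ ∈ T, (c γ : ℝ) • γ} ∧
      ∀ β ∈ A, ∀ γ ∈ B, ⟪β, γ⟫ = 0 := by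
  exact gprime_root_system_connected_general D α hα hcom a ha.2.1
end

section
/- Let W be the Weyl group of Φ and suppose π', π ∈ W satisfy π' ≤ π in the Bruhat order. Then there exists an injection ι : Inv(π') → Inv(π) such that for every β ∈ Inv(π'), the difference ι(β) − β is a nonnegative integer combination of the simple roots (i.e., ι(β) is greater than or equal to β in the root order). -/
open scoped RealInnerProductSpace

section Weyl

variable {V : Type*} [NormedAddCommGroup V] [InnerProductSpace ℝ V]

/-- `w` is the reflection in some root of `Φ`. -/
def IsRootReflection (Φ : Set V) (w : V ≃ₗ[ℝ] V) : Prop :=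
  ∃ β ∈ Φ, ∀ x, w x = x - rpair x β • β

/-- The Weyl group of `Φ`: the subgroup of linear automorphisms generated by the
reflections in the roots. -/
def weylGroup (Φ : Set V) : Subgroup (V ≃ₗ[ℝ] V) :=
  Subgroup.closure {w | IsRootReflection Φ w}

/-- The standard parabolic subgroup of the Weyl group generated by the simple reflections
`s_δ` for `δ` in a set `J` of simple roots. -/
def simpleParabolic (D : IrredRootSystem V) (J : Set V) : Subgroup (V ≃ₗ[ℝ] V) :=
  Subgroup.closure {u | ∃ δ ∈ J ∩ (↑D.Δ : Set V), ∀ x, u x = x - rpair x δ • δ}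

/-- The inversion set `Inv(w) = {β ∈ Φ⁺ : w(β) ∈ Φ⁻}`. -/
def invSet (D : IrredRootSystem V) (w : V ≃ₗ[ℝ] V) : Set V :=
  {β | β ∈ D.Pos ∧ w β ∈ D.Neg}

/-- The length `ℓ(w) = |Inv(w)|`. -/
noncomputable def len (D : IrredRootSystem V) (w : V ≃ₗ[ℝ] V) : ℕ := (invSet D w).ncard

end Weyl

/-- The Bruhat order on the Weyl group: the partial order generated by the relations
`w < t * w` whenever `t` is a reflection in a root and `ℓ(w) < ℓ(t * w)`. -/
def bruhatLe {V : Type*} [NormedAddCommGroup V] [InnerProductSpace ℝ V]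
    (D : IrredRootSystem V) : (V ≃ₗ[ℝ] V) → (V ≃ₗ[ℝ] V) → Prop :=
  Relation.ReflTransGen
    (fun u v => (∃ t : V ≃ₗ[ℝ] V, IsRootReflection D.Φ t ∧ v = t * u) ∧ len D u < len D v)

/-!
By transitivity it suffices to treat a single step `g < t * g`, where `g` is an element of `W` or
any other automorphism of the root system, that is, an element of the stabilizer of `Φ`. Writing
`t * g = g * s_γ` with `γ` positive, the inequality of lengths forces `g γ` to be positive. Send an
inversion `β` of `g` to itself if it is still an inversion of `g * s_γ`, and to `s_γ β` otherwise.
If `⟨β, γ⟩ ≥ 0`, then `g (s_γ β) = g β - ⟨β, γ⟩ g γ ≤ g β < 0`, so that `β` is still an inversion;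
hence only roots with `⟨β, γ⟩ < 0` are moved, and these move up. The map is injective because
`s_γ β` is not an inversion of `g` when `β` is moved.
-/

open scoped Pointwise

section Reflection

variable {V : Type*} [NormedAddCommGroup V] [InnerProductSpace ℝ V]

/-- The coroot `γ^∨ = 2(·, γ)/(γ, γ)` as a linear functional, so that `γ^∨ β = ⟨β, γ⟩`. It is `0`
for `γ = 0`. -/
noncomputable def corootForm (γ : V) : Module.Dual ℝ V := (2 / ⟪γ, γ⟫) • innerₗ V γ

lemma corootForm_apply (γ x : V) : corootForm γ x = rpair x γ := by
  rw [rpair, real_inner_comm γ x]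
  simp [corootForm, div_mul_eq_mul_div]

lemma corootForm_apply_self {γ : V} (hγ : γ ≠ 0) : corootForm γ γ = 2 := by
  rw [corootForm_apply, rpair, mul_div_assoc, div_self (inner_self_ne_zero.2 hγ), mul_one]

/-- The orthogonal reflection `s_γ` in the hyperplane orthogonal to `γ`. It is the identity for
`γ = 0`. -/
noncomputable def rootReflection (γ : V) : V ≃ₗ[ℝ] V := (ℝ ∙ γ)ᗮ.reflection.toLinearEquiv

lemma rootReflection_apply (γ x : V) : rootReflection γ x = x - rpair x γ • γ := by
  have h : rootReflection γ x = -(ℝ ∙ γ).reflection x := Submodule.reflection_orthogonal_apply _ x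
  rw [h, Submodule.reflection_singleton_apply, rpair, real_inner_self_eq_norm_sq,
    real_inner_comm γ x, RCLike.ofReal_real_eq_id, id]
  module

lemma rootReflection_self (γ : V) : rootReflection γ γ = -γ :=
  Submodule.reflection_orthogonalComplement_singleton_eq_neg γ

lemma rootReflection_involutive (γ : V) : Function.Involutive (rootReflection γ) :=
  Submodule.reflection_involutive _

lemma rootReflection_mul_self (γ : V) : rootReflection γ * rootReflection γ = 1 :=
  LinearEquiv.ext (rootReflection_involutive γ)

lemma rootReflection_neg (γ : V) : rootReflection (-γ) = rootReflection γ := by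
  ext x
  simp [rootReflection_apply, rpair, neg_div]

lemma isRootReflection_iff {Φ : Set V} {t : V ≃ₗ[ℝ] V} :
    IsRootReflection Φ t ↔ ∃ β ∈ Φ, t = rootReflection β := by
  simp only [IsRootReflection, LinearEquiv.ext_iff, rootReflection_apply]

end Reflection

namespace IrredRootSystem

variable {V : Type*} [NormedAddCommGroup V] [InnerProductSpace ℝ V] {D : IrredRootSystem V}
  {β γ δ : V} {g u v w t : V ≃ₗ[ℝ] V}

lemma ne_zero_of_mem (hβ : β ∈ D.Φ) : β ≠ 0 :=
  ne_of_mem_of_not_mem hβ D.zero_notMem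

section Automorphisms

lemma apply_mem_iff (hg : g ∈ MulAction.stabilizer (V ≃ₗ[ℝ] V) D.Φ) : g β ∈ D.Φ ↔ β ∈ D.Φ :=
  MulAction.mem_stabilizer_set.1 hg β

lemma rootReflection_apply_mem (hβ : β ∈ D.Φ) (hγ : γ ∈ D.Φ) : rootReflection γ β ∈ D.Φ :=
  rootReflection_apply γ β ▸ D.reflect_mem β hβ γ hγ

lemma rootReflection_mem_stabilizer (hγ : γ ∈ D.Φ) :
    rootReflection γ ∈ MulAction.stabilizer (V ≃ₗ[ℝ] V) D.Φ :=
  (MulAction.mem_stabilizer_set' D.finite).2 fun _ hβ => rootReflection_apply_mem hβ hγ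

lemma _root_.IsRootReflection.mem_stabilizer (ht : IsRootReflection D.Φ t) :
    t ∈ MulAction.stabilizer (V ≃ₗ[ℝ] V) D.Φ := by
  obtain ⟨β, hβ, rfl⟩ := isRootReflection_iff.1 ht
  exact rootReflection_mem_stabilizer hβ

lemma weylGroup_le_stabilizer : weylGroup D.Φ ≤ MulAction.stabilizer (V ≃ₗ[ℝ] V) D.Φ :=
  (Subgroup.closure_le _).2 fun _ => IsRootReflection.mem_stabilizer

-- `γ^∨` is the only functional with value `2` at `γ` whose reflection preserves the finite spanning
-- set `Φ`, and `(g γ)^∨ ∘ g` is another one.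
lemma rpair_apply_apply (hg : g ∈ MulAction.stabilizer (V ≃ₗ[ℝ] V) D.Φ) (hγ : γ ∈ D.Φ) (x : V) :
    rpair (g x) (g γ) = rpair x γ := by
  have hgγ : g γ ∈ D.Φ := (apply_mem_iff hg).2 hγ
  have corootForm_comp : corootForm (g γ) ∘ₗ g.toLinearMap = corootForm γ := by
    refine Module.Dual.eq_of_preReflection_mapsTo (x := γ) D.finite D.spans
      (corootForm_apply_self (ne_zero_of_mem hgγ)) (fun β hβ => ?_)
      (corootForm_apply_self (ne_zero_of_mem hγ)) (fun β hβ => ?_)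
    · rw [← apply_mem_iff hg]
      simpa [Module.preReflection_apply, corootForm_apply] using
        D.reflect_mem (g β) ((apply_mem_iff hg).2 hβ) (g γ) hgγ
    · simpa [Module.preReflection_apply, corootForm_apply] using D.reflect_mem β hβ γ hγ
  simpa [corootForm_apply] using LinearMap.congr_fun corootForm_comp x

lemma rootReflection_apply_mul (hg : g ∈ MulAction.stabilizer (V ≃ₗ[ℝ] V) D.Φ) (hγ : γ ∈ D.Φ) :
    rootReflection (g γ) * g = g * rootReflection γ := by
  ext x
  simp [rootReflection_apply, rpair_apply_apply hg hγ]

end Automorphisms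

section RootOrder

lemma m_eq_of_eq_sum (hβ : β ∈ D.Φ) {c : V → ℤ} (h : β = ∑ δ ∈ D.Δ, (c δ : ℝ) • δ)
    (hδ : δ ∈ D.Δ) : D.m β δ = c δ := by
  have hΔ : LinearIndepOn ℝ id (D.Δ : Set V) := D.base_indep
  exact_mod_cast linearIndepOn_finset_iffₛ.1 hΔ (fun δ => (D.m β δ : ℝ)) (fun δ => (c δ : ℝ))
    ((D.base_repr β hβ).symm.trans h) δ hδ

lemma m_neg (hβ : β ∈ D.Φ) (hδ : δ ∈ D.Δ) : D.m (-β) δ = -D.m β δ := by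
  refine m_eq_of_eq_sum (c := fun δ => -D.m β δ) (D.neg_mem β hβ) ?_ hδ
  conv_lhs => rw [D.base_repr β hβ]
  simp

lemma mem_pos_or_mem_neg (hβ : β ∈ D.Φ) : β ∈ D.Pos ∨ β ∈ D.Neg :=
  (D.base_sign β hβ).imp (⟨hβ, ·⟩) (⟨hβ, ·⟩)

lemma neg_mem_pos (hβ : β ∈ D.Neg) : -β ∈ D.Pos :=
  ⟨D.neg_mem β hβ.1, fun δ hδ => by simpa [m_neg hβ.1 hδ] using hβ.2 δ hδ⟩

variable (D) in
/-- The root order: `β ≤ γ` if `γ - β` is a nonnegative integer combination of simple roots. -/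
def RootLE (β γ : V) : Prop := ∃ c : V → ℕ, γ - β = ∑ δ ∈ D.Δ, (c δ : ℝ) • δ

lemma RootLE.refl (β : V) : D.RootLE β β := ⟨0, by simp⟩

lemma RootLE.trans {α β γ : V} (hαβ : D.RootLE α β) (hβγ : D.RootLE β γ) : D.RootLE α γ := by
  obtain ⟨c, hc⟩ := hαβ
  obtain ⟨d, hd⟩ := hβγ
  refine ⟨c + d, ?_⟩
  rw [← sub_add_sub_cancel' β α γ, hc, hd, ← Finset.sum_add_distrib]
  simp [add_smul]

lemma rootLE_add_nsmul (hγ : γ ∈ D.Pos) (β : V) (n : ℕ) : D.RootLE β (β + n • γ) := by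
  refine ⟨fun δ => n * (D.m γ δ).toNat, ?_⟩
  conv_lhs => rw [add_sub_cancel_left, D.base_repr γ hγ.1, Finset.smul_sum]
  refine Finset.sum_congr rfl fun δ hδ => ?_
  have toNat_m : ((D.m γ δ).toNat : ℝ) = D.m γ δ := by
    exact_mod_cast Int.toNat_of_nonneg (hγ.2 δ hδ)
  rw [Nat.cast_mul, toNat_m, mul_smul, Nat.cast_smul_eq_nsmul]

lemma RootLE.m_le (h : D.RootLE β γ) (hβ : β ∈ D.Φ) (hγ : γ ∈ D.Φ) (hδ : δ ∈ D.Δ) :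
    D.m β δ ≤ D.m γ δ := by
  obtain ⟨c, hc⟩ := h
  have m_γ : D.m γ δ = D.m β δ + c δ := by
    refine m_eq_of_eq_sum (c := fun δ => D.m β δ + c δ) hγ ?_ hδ
    rw [← add_sub_cancel β γ, hc]
    conv_lhs => rw [D.base_repr β hβ, ← Finset.sum_add_distrib]
    simp [add_smul]
  lia

lemma RootLE.mem_pos (h : D.RootLE β γ) (hβ : β ∈ D.Pos) (hγ : γ ∈ D.Φ) : γ ∈ D.Pos :=
  ⟨hγ, fun δ hδ => (hβ.2 δ hδ).trans (h.m_le hβ.1 hγ hδ)⟩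

lemma RootLE.mem_neg (h : D.RootLE β γ) (hβ : β ∈ D.Φ) (hγ : γ ∈ D.Neg) : β ∈ D.Neg :=
  ⟨hβ, fun δ hδ => (h.m_le hβ hγ.1 hδ).trans (hγ.2 δ hδ)⟩

end RootOrder

section Inversions

lemma invSet_finite (D : IrredRootSystem V) (w : V ≃ₗ[ℝ] V) : (invSet D w).Finite :=
  D.finite.subset fun _ hβ => hβ.1.1

lemma exists_rootReflection_eq_add_nsmul (hβ : β ∈ D.Φ) (hγ : γ ∈ D.Φ) :
    ∃ n : ℕ, rootReflection γ β = β + n • γ ∨ β = rootReflection γ β + n • γ := by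
  obtain ⟨z, hz⟩ := D.crystallographic β hβ γ hγ
  obtain ⟨n, rfl | rfl⟩ := z.eq_nat_or_neg
  · exact ⟨n, .inr (by simp [rootReflection_apply, hz, Nat.cast_smul_eq_nsmul])⟩
  · exact ⟨n, .inl (by simp [rootReflection_apply, hz, Nat.cast_smul_eq_nsmul])⟩

lemma mem_invSet_mul_rootReflection_or (hg : g ∈ MulAction.stabilizer (V ≃ₗ[ℝ] V) D.Φ)
    (hγ : γ ∈ D.Pos) (hgγ : g γ ∈ D.Pos) (hβ : β ∈ invSet D g) :
    β ∈ invSet D (g * rootReflection γ) ∨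
      rootReflection γ β ∈ invSet D (g * rootReflection γ) ∧ D.RootLE β (rootReflection γ β) := by
  have hsβ : rootReflection γ β ∈ D.Φ := rootReflection_apply_mem hβ.1.1 hγ.1
  obtain ⟨n, hn | hn⟩ := exists_rootReflection_eq_add_nsmul hβ.1.1 hγ.1
  · have hle : D.RootLE β (rootReflection γ β) := hn ▸ rootLE_add_nsmul hγ β n
    have image_mem : (g * rootReflection γ) (rootReflection γ β) ∈ D.Neg := by
      simpa [rootReflection_involutive γ β] using hβ.2
    exact .inr ⟨⟨hle.mem_pos hβ.1 hsβ, image_mem⟩, hle⟩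
  · have hle : D.RootLE (g (rootReflection γ β)) (g β) := by
      have image_eq : g β = g (rootReflection γ β) + n • g γ := by rw [← map_nsmul, ← map_add, ← hn]
      exact image_eq ▸ rootLE_add_nsmul hgγ _ n
    exact .inl ⟨hβ.1, hle.mem_neg ((apply_mem_iff hg).2 hsβ) hβ.2⟩

variable (D) in
/-- Domination of inversion sets: `Inv(u)` injects into `Inv(v)` by a map that moves every root
weakly up in the root order. The map is encoded as a function on all of `V`. -/
def InvLE (u v : V ≃ₗ[ℝ] V) : Prop :=
  ∃ ι : V → V, Set.MapsTo ι (invSet D u) (invSet D v) ∧ Set.InjOn ι (invSet D u) ∧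
    ∀ β ∈ invSet D u, D.RootLE β (ι β)

lemma InvLE.refl (w : V ≃ₗ[ℝ] V) : D.InvLE w w :=
  ⟨id, Set.mapsTo_id _, Set.injOn_id _, fun β _ => RootLE.refl β⟩

lemma InvLE.trans (huv : D.InvLE u v) (hvw : D.InvLE v w) : D.InvLE u w := by
  obtain ⟨ι, ι_mapsTo, ι_injOn, le_ι⟩ := huv
  obtain ⟨κ, κ_mapsTo, κ_injOn, le_κ⟩ := hvw
  exact ⟨κ ∘ ι, κ_mapsTo.comp ι_mapsTo, κ_injOn.comp ι_injOn ι_mapsTo,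
    fun β hβ => (le_ι β hβ).trans (le_κ _ (ι_mapsTo hβ))⟩

lemma InvLE.len_le (h : D.InvLE u v) : len D u ≤ len D v := by
  obtain ⟨ι, ι_mapsTo, ι_injOn, -⟩ := h
  exact Set.ncard_le_ncard_of_injOn ι ι_mapsTo ι_injOn (D.invSet_finite v)

lemma invLE_mul_rootReflection (hg : g ∈ MulAction.stabilizer (V ≃ₗ[ℝ] V) D.Φ)
    (hγ : γ ∈ D.Pos) (hgγ : g γ ∈ D.Pos) : D.InvLE g (g * rootReflection γ) := by
  classical
  let T := invSet D (g * rootReflection γ)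
  have moved : ∀ β ∈ invSet D g, β ∉ T →
      rootReflection γ β ∈ T ∧ D.RootLE β (rootReflection γ β) := fun β hβ hβT =>
    (mem_invSet_mul_rootReflection_or hg hγ hgγ hβ).resolve_left hβT
  have moved_notMem : ∀ β ∈ invSet D g, β ∉ T → rootReflection γ β ∉ invSet D g :=
    fun β hβ hβT hsβ => hβT ⟨hβ.1, hsβ.2⟩
  refine ⟨fun β => if β ∈ T then β else rootReflection γ β, fun β hβ => ?_,
    fun α hα β hβ hαβ => ?_, fun β hβ => ?_⟩
  · dsimp only
    split_ifs with hβT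
    exacts [hβT, (moved β hβ hβT).1]
  · dsimp only at hαβ
    split_ifs at hαβ with hαT hβT hβT
    · exact hαβ
    · exact absurd (hαβ ▸ hα) (moved_notMem β hβ hβT)
    · exact absurd (hαβ ▸ hβ) (moved_notMem α hα hαT)
    · exact (rootReflection γ).injective hαβ
  · dsimp only
    split_ifs with hβT
    exacts [RootLE.refl β, (moved β hβ hβT).2]

lemma apply_mem_pos_of_len_lt (hg : g ∈ MulAction.stabilizer (V ≃ₗ[ℝ] V) D.Φ) (hγ : γ ∈ D.Pos)
    (hlen : len D g < len D (g * rootReflection γ)) : g γ ∈ D.Pos := by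
  refine (mem_pos_or_mem_neg ((apply_mem_iff hg).2 hγ.1)).resolve_right fun hgγ => ?_
  have image_mem : (g * rootReflection γ) γ ∈ D.Pos := by
    simpa [rootReflection_self] using neg_mem_pos hgγ
  have hle : D.InvLE (g * rootReflection γ) (g * rootReflection γ * rootReflection γ) :=
    invLE_mul_rootReflection (mul_mem hg (rootReflection_mem_stabilizer hγ.1)) hγ image_mem
  rw [mul_assoc, rootReflection_mul_self, mul_one] at hle
  exact hlen.not_ge hle.len_le

lemma exists_mem_pos_mul_eq_mul_rootReflection (hg : g ∈ MulAction.stabilizer (V ≃ₗ[ℝ] V) D.Φ)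
    (ht : IsRootReflection D.Φ t) : ∃ γ ∈ D.Pos, t * g = g * rootReflection γ := by
  obtain ⟨β, hβ, rfl⟩ := isRootReflection_iff.1 ht
  obtain ⟨γ, rfl⟩ := g.surjective β
  have hγ : γ ∈ D.Φ := (apply_mem_iff hg).1 hβ
  have conj := rootReflection_apply_mul hg hγ
  rcases mem_pos_or_mem_neg hγ with hpos | hneg
  · exact ⟨γ, hpos, conj⟩
  · exact ⟨-γ, neg_mem_pos hneg, by rw [conj, rootReflection_neg]⟩

lemma invLE_mul_of_len_lt (hg : g ∈ MulAction.stabilizer (V ≃ₗ[ℝ] V) D.Φ)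
    (ht : IsRootReflection D.Φ t) (hlen : len D g < len D (t * g)) : D.InvLE g (t * g) := by
  obtain ⟨γ, hγ, htg⟩ := exists_mem_pos_mul_eq_mul_rootReflection hg ht
  rw [htg] at hlen ⊢
  exact invLE_mul_rootReflection hg hγ (apply_mem_pos_of_len_lt hg hγ hlen)

end Inversions

end IrredRootSystem

theorem bruhat_inversion_injection_general {V : Type*} [NormedAddCommGroup V]
    [InnerProductSpace ℝ V] (D : IrredRootSystem V) (π' π : V ≃ₗ[ℝ] V)
    (hπ' : π' ∈ MulAction.stabilizer (V ≃ₗ[ℝ] V) D.Φ) (hle : bruhatLe D π' π) :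
    D.InvLE π' π := by
  induction hle using Relation.ReflTransGen.head_induction_on with
  | refl => exact .refl π
  | head hstep _ ih =>
    obtain ⟨⟨t, ht, rfl⟩, hlen⟩ := hstep
    exact (IrredRootSystem.invLE_mul_of_len_lt hπ' ht hlen).trans
      (ih (mul_mem ht.mem_stabilizer hπ'))

/-- If `π' ≤ π` in the Bruhat order, then there is an injection
`ι : Inv(π') → Inv(π)` such that `ι(β) - β` is a nonnegative integer combination of the
simple roots for each `β ∈ Inv(π')`. -/
theorem bruhat_inversion_injection {V : Type*} [NormedAddCommGroup V]
    [InnerProductSpace ℝ V] (D : IrredRootSystem V)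
    (π' π : V ≃ₗ[ℝ] V) (hπ' : π' ∈ weylGroup D.Φ) (hπ : π ∈ weylGroup D.Φ)
    (hle : bruhatLe D π' π) :
    ∃ ι : V → V, Set.MapsTo ι (invSet D π') (invSet D π) ∧ Set.InjOn ι (invSet D π') ∧
      ∀ β ∈ invSet D π', ∃ c : V → ℕ, ι β - β = ∑ δ ∈ D.Δ, (c δ : ℝ) • δ :=
  bruhat_inversion_injection_general D π' π (IrredRootSystem.weylGroup_le_stabilizer hπ') hle
end

section
/- Let n ≥ 1 and 0 ≤ r ≤ n be integers. Let w_1 < w_2 < ⋯ < w_n be integers with 1 ≤ w_a ≤ 2n for all a and w_a + w_b ≠ 2n+1 for all a, b. Let K ⊆ {1, …, n} be a subset of size n−r, with increasing enumeration κ[1] < κ[2] < ⋯ < κ[n−r]. Then Σ_{j=1}^{n−r} (w_{κ[j]} − κ[j]) − #{(a,b) : 1 ≤ a < b ≤ n−r and w_{κ[a]} + w_{κ[b]} > 2n+1} = #{(a,b) : 1 ≤ a ≤ b ≤ n, w_a + w_b > 2n+1, and (a ∈ K or b ∈ K)}. -/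
/-!
Each entry `w_k` counts the numbers `1, …, w_k`. The entries of `w` among them are
`w_1, …, w_k`; since `w` and its reflection `v ↦ 2n + 1 - v` partition `{1, …, 2n}`, the others are
the reflections of the `w_a` with `w_a + w_k > 2n + 1`. Hence `w_k - k` is the number of such `a`,
and the sum of `w_k - k` over `K` counts ordered pairs `(k, a)` with `k ∈ K`. As the condition is
symmetric in `k` and `a`, sorting these pairs counts every unordered pair meeting `K` once, except
that a pair of distinct elements of `K` is counted twice: this is the correction term.
-/

section Counting

open Finset

theorem card_filter_image_of_injOn {α β : Type*} [DecidableEq β] {f : α → β} {s : Finset α}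
    (hf : Set.InjOn f s) (p : β → Prop) [DecidablePred p] :
    #{b ∈ s.image f | p b} = #{a ∈ s | p (f a)} := by
  rw [filter_image, card_image_of_injOn (hf.mono (filter_subset _ s))]

theorem card_filter_lt_image_product_of_strictMonoOn {α β : Type*} [LinearOrder α] [LinearOrder β]
    {f : α → β} {s : Finset α} (hf : StrictMonoOn f s) (R : β → β → Prop) [DecidableRel R] :
    #{p ∈ s.image f ×ˢ s.image f | p.1 < p.2 ∧ R p.1 p.2} =
      #{p ∈ s ×ˢ s | p.1 < p.2 ∧ R (f p.1) (f p.2)} := by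
  have hinj : Set.InjOn (Prod.map f f) (s ×ˢ s : Finset (α × α)) := by
    rw [coe_product]
    exact hf.injOn.prodMap hf.injOn
  rw [← prodMap_image_product, card_filter_image_of_injOn hinj]
  refine congrArg card (filter_congr fun p hp ↦ ?_)
  obtain ⟨h₁, h₂⟩ := mem_product.mp hp
  exact and_congr_left' (hf.lt_iff_lt h₁ h₂)

theorem sum_card_filter_eq_card_add_card_of_symm {α : Type*} [LinearOrder α] {s K : Finset α}
    (hK : K ⊆ s) {R : α → α → Prop} [DecidableRel R] (hR : ∀ a b, R a b → R b a) :
    ∑ k ∈ K, #{a ∈ s | R a k} =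
      #{p ∈ s ×ˢ s | p.1 ≤ p.2 ∧ R p.1 p.2 ∧ (p.1 ∈ K ∨ p.2 ∈ K)} +
        #{p ∈ K ×ˢ K | p.1 < p.2 ∧ R p.1 p.2} := by
  let A : Finset (α × α) := {p ∈ s ×ˢ s | p.1 ≤ p.2 ∧ R p.1 p.2 ∧ p.1 ∈ K}
  let B : Finset (α × α) := {p ∈ s ×ˢ s | p.1 < p.2 ∧ R p.1 p.2 ∧ p.2 ∈ K}
  have hunion : A ∪ B = {p ∈ s ×ˢ s | p.1 ≤ p.2 ∧ R p.1 p.2 ∧ (p.1 ∈ K ∨ p.2 ∈ K)} := by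
    ext p
    simp only [A, B, mem_union, mem_filter]
    grind
  have hinter : A ∩ B = {p ∈ K ×ˢ K | p.1 < p.2 ∧ R p.1 p.2} := by
    ext p
    simp only [A, B, mem_inter, mem_filter, mem_product]
    grind
  have hA : #{p ∈ K ×ˢ s | R p.2 p.1 ∧ p.1 ≤ p.2} = #A := by
    congr 1
    ext p
    simp only [A, mem_filter, mem_product]
    grind
  have hB : #{p ∈ K ×ˢ s | R p.2 p.1 ∧ ¬ p.1 ≤ p.2} = #B := by
    refine card_equiv (Equiv.prodComm α α) fun p ↦ ?_
    simp only [B, mem_filter, mem_product, Equiv.prodComm_apply, Prod.fst_swap, Prod.snd_swap]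
    grind
  calc
    ∑ k ∈ K, #{a ∈ s | R a k} = #{p ∈ K ×ˢ s | R p.2 p.1} := by
      simp only [card_filter, sum_product]
    _ = #A + #B := by
      rw [← hA, ← hB, ← filter_filter, ← filter_filter, card_filter_add_card_filter_not]
    _ = _ := by rw [← card_union_add_card_inter, hunion, hinter]

end Counting

section Reflection

open Finset

variable {N : ℕ} {W : Finset ℕ}

theorem injOn_reflect_of_subset_Icc (hW : W ⊆ Icc 1 N) :
    Set.InjOn (N + 1 - ·) (W : Set ℕ) := by
  intro u hu v hv h
  have := mem_Icc.mp (hW hu)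
  have := mem_Icc.mp (hW hv)
  exact (tsub_right_inj (by omega) (by omega)).mp h

theorem image_reflect_eq_Icc_sdiff (hW : W ⊆ Icc 1 N) (hcard : N ≤ 2 * #W)
    (hsum : ∀ u ∈ W, ∀ v ∈ W, u + v ≠ N + 1) :
    W.image (N + 1 - ·) = Icc 1 N \ W := by
  apply eq_of_subset_of_card_le
  · refine image_subset_iff.mpr fun v hv ↦ ?_
    have := mem_Icc.mp (hW hv)
    exact mem_sdiff.mpr ⟨mem_Icc.mpr (by omega), fun hmem ↦ hsum _ hmem v hv (by omega)⟩
  · rw [card_image_of_injOn (injOn_reflect_of_subset_Icc hW), card_sdiff_of_subset hW, Nat.card_Icc]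
    omega

theorem card_filter_le_add_card_filter_lt_add (hW : W ⊆ Icc 1 N) (hcard : N ≤ 2 * #W)
    (hsum : ∀ u ∈ W, ∀ v ∈ W, u + v ≠ N + 1) {x : ℕ} (hx : x ≤ N) :
    #{v ∈ W | v ≤ x} + #{v ∈ W | N < v + x} = x := by
  have hreflect : #{v ∈ W | N < v + x} = #{v ∈ Icc 1 N \ W | v ≤ x} := by
    rw [← image_reflect_eq_Icc_sdiff hW hcard hsum,
      card_filter_image_of_injOn (injOn_reflect_of_subset_Icc hW)]
    refine congrArg card (filter_congr fun v hv ↦ ?_)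
    have := mem_Icc.mp (hW hv)
    omega
  calc
    #{v ∈ W | v ≤ x} + #{v ∈ W | N < v + x} =
        #{v ∈ W | v ≤ x} + #{v ∈ Icc 1 N \ W | v ≤ x} := by rw [hreflect]
    _ = #{v ∈ Icc 1 N | v ≤ x} := by
      rw [← card_union_of_disjoint (disjoint_filter_filter disjoint_sdiff), ← filter_union,
        union_sdiff_of_subset hW]
    _ = #(Icc 1 x) := by congr 1; grind
    _ = x := by simp

end Reflection

/-- The index sequences `w 1 < ⋯ < w n` of Schubert positions of `LG(n)`. Indices start at `1`, and
the values of `w` outside `{1, …, n}` are irrelevant. -/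
structure IsLagrangianSchubertPosition (n : ℕ) (w : ℕ → ℕ) : Prop where
  strictMonoOn : StrictMonoOn w (Finset.Icc 1 n)
  mapsTo : Set.MapsTo w (Finset.Icc 1 n) (Finset.Icc 1 (2 * n))
  add_ne : ∀ a ∈ Finset.Icc 1 n, ∀ b ∈ Finset.Icc 1 n, w a + w b ≠ 2 * n + 1

namespace IsLagrangianSchubertPosition

open Finset

variable {n : ℕ} {w : ℕ → ℕ}

theorem eq_add_card_filter_lt_add (hw : IsLagrangianSchubertPosition n w) {k : ℕ}
    (hk : k ∈ Icc 1 n) :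
    w k = k + #{a ∈ Icc 1 n | 2 * n + 1 < w a + w k} := by
  have hinj := hw.strictMonoOn.injOn
  have hlower : #{a ∈ Icc 1 n | w a ≤ w k} = k := calc
    #{a ∈ Icc 1 n | w a ≤ w k} = #{a ∈ Icc 1 n | a ≤ k} :=
      congrArg card (filter_congr fun a ha ↦ hw.strictMonoOn.le_iff_le ha hk)
    _ = #(Icc 1 k) := by congr 1; grind
    _ = k := by simp
  have hupper : #{a ∈ Icc 1 n | 2 * n < w a + w k} = #{a ∈ Icc 1 n | 2 * n + 1 < w a + w k} := by
    refine congrArg card (filter_congr fun a ha ↦ ?_)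
    have := hw.add_ne a ha k hk
    omega
  have hcount := card_filter_le_add_card_filter_lt_add (N := 2 * n) (W := (Icc 1 n).image w)
    (image_subset_iff.mpr hw.mapsTo) (by simp [card_image_of_injOn hinj])
    (by simpa only [forall_mem_image] using hw.add_ne) (mem_Icc.mp (hw.mapsTo hk)).2
  simp only [card_filter_image_of_injOn hinj, hlower, hupper] at hcount
  exact hcount.symm

theorem sum_sub_index_eq_card_add_card (hw : IsLagrangianSchubertPosition n w) {K : Finset ℕ}
    (hK : K ⊆ Icc 1 n) :
    ∑ k ∈ K, ((w k : ℤ) - k) =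
      #{p ∈ Icc 1 n ×ˢ Icc 1 n | p.1 ≤ p.2 ∧ 2 * n + 1 < w p.1 + w p.2 ∧ (p.1 ∈ K ∨ p.2 ∈ K)} +
        #{p ∈ K ×ˢ K | p.1 < p.2 ∧ 2 * n + 1 < w p.1 + w p.2} := by
  have hentry : ∀ k ∈ K, (w k : ℤ) - k = #{a ∈ Icc 1 n | 2 * n + 1 < w a + w k} := by
    intro k hk
    have := hw.eq_add_card_filter_lt_add (hK hk)
    omega
  rw [sum_congr rfl hentry]
  exact_mod_cast sum_card_filter_eq_card_add_card_of_symm hK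
    (R := fun a b ↦ 2 * n + 1 < w a + w b) fun a b h ↦ by omega

end IsLagrangianSchubertPosition

/-- The combinatorial identity for Schubert positions on the Lagrangian
Grassmannian `LG(n)`: for an admissible increasing sequence `w` and a subset `K` of
`{1, …, n}` of size `n - r` with increasing enumeration `κ`,
`∑_j (w_{κ[j]} - κ[j]) - #{a < b : w_{κ[a]} + w_{κ[b]} > 2n+1}`
equals the number of pairs `(a, b)` with `a ≤ b`, `w_a + w_b > 2n+1`, and `a ∈ K` or
`b ∈ K`. -/
theorem lagrangian_coinversion_identity (n r : ℕ) (hn : 1 ≤ n) (hr : r ≤ n)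
    (w : ℕ → ℕ)
    (hwmono : ∀ a b, 1 ≤ a → a < b → b ≤ n → w a < w b)
    (hwlb : ∀ a, 1 ≤ a → a ≤ n → 1 ≤ w a)
    (hwub : ∀ a, 1 ≤ a → a ≤ n → w a ≤ 2 * n)
    (hwsum : ∀ a b, 1 ≤ a → a ≤ n → 1 ≤ b → b ≤ n → w a + w b ≠ 2 * n + 1)
    (K : Finset ℕ) (hK : K ⊆ Finset.Icc 1 n) (hKcard : K.card = n - r)
    (κ : ℕ → ℕ)
    (hκmem : ∀ j, 1 ≤ j → j ≤ n - r → κ j ∈ K)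
    (hκmono : ∀ i j, 1 ≤ i → i < j → j ≤ n - r → κ i < κ j) :
    (∑ j ∈ Finset.Icc 1 (n - r), ((w (κ j) : ℤ) - (κ j : ℤ)))
      - (((Finset.Icc 1 (n - r) ×ˢ Finset.Icc 1 (n - r)).filter
            (fun p => p.1 < p.2 ∧ 2 * n + 1 < w (κ p.1) + w (κ p.2))).card : ℤ)
      = (((Finset.Icc 1 n ×ˢ Finset.Icc 1 n).filter
            (fun p => p.1 ≤ p.2 ∧ 2 * n + 1 < w p.1 + w p.2 ∧ (p.1 ∈ K ∨ p.2 ∈ K))).card : ℤ) := by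
  have hw : IsLagrangianSchubertPosition n w := by
    constructor <;> simp only [StrictMonoOn, Set.MapsTo, Finset.mem_coe, Finset.mem_Icc] <;> grind
  have hκ : StrictMonoOn κ (Finset.Icc 1 (n - r)) := fun i hi j hj hij ↦
    hκmono i j (Finset.mem_Icc.mp hi).1 hij (Finset.mem_Icc.mp hj).2
  have hκK : (Finset.Icc 1 (n - r)).image κ = K := by
    refine Finset.eq_of_subset_of_card_le (Finset.image_subset_iff.mpr fun j hj ↦ ?_) ?_
    · exact hκmem j (Finset.mem_Icc.mp hj).1 (Finset.mem_Icc.mp hj).2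
    · simp [Finset.card_image_of_injOn hκ.injOn, hKcard]
  have hpairs := card_filter_lt_image_product_of_strictMonoOn hκ fun a b ↦ 2 * n + 1 < w a + w b
  rw [hκK] at hpairs
  rw [← Finset.sum_image (f := fun k ↦ (w k : ℤ) - k) hκ.injOn, hκK,
    hw.sum_sub_index_eq_card_add_card hK, hpairs, add_sub_cancel_right]
end
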